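/- Let K be a field and n ≥ 1. Let v ∈ K^{2n} be the last standard basis vector and let P' = {α ∈ Sp_{2n}(K) : α·v ∈ K·v and α·v ≠ 0} be the stabilizer of the line K·v. Then for every g ∈ Sp_{2n}(K) there exist a ∈ GL_n(K), a symmetric matrix s ∈ M_n(K), and γ ∈ P' such that g = diag[a, ᵀa^{−1}] · m(s) · γ or g = diag[a, ᵀa^{−1}] · m(s) · η_n · γ, where m(s) = (I_n s; 0 I_n) and η_n = (0 −I_n; I_n 0). -/

import Mathlib

open Matrix

/-- The matrix `η_n = (0 −I_n; I_n 0)`. -/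
def symJ (n : ℕ) (K : Type*) [CommRing K] :
    Matrix (Fin n ⊕ Fin n) (Fin n ⊕ Fin n) K :=
  Matrix.fromBlocks 0 (-1) 1 0

/-- The symplectic group `Sp_{2n}(K) = {α : ᵀα η_n α = η_n}`. -/
def Sp (n : ℕ) (K : Type*) [CommRing K] :
    Set (Matrix (Fin n ⊕ Fin n) (Fin n ⊕ Fin n) K) :=
  {α | αᵀ * symJ n K * α = symJ n K}

/-- The last standard basis vector of `K^{2n}`. -/
def lastBasisVec (n : ℕ) (K : Type*) [CommRing K] (hn : 1 ≤ n) : Fin n ⊕ Fin n → K :=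
  Pi.single (Sum.inr ⟨n - 1, by omega⟩) 1

theorem exists_unit_mulVec_single {K : Type*} [Field K] {n : ℕ} (e : Fin n) (y : Fin n → K)
    (hy : y ≠ 0) : ∃ b : Matrix (Fin n) (Fin n) K, IsUnit b ∧ b.mulVec (Pi.single e 1) = y := by
  obtain ⟨j, hj⟩ := Function.ne_iff.mp hy
  have hdet : ((1 : Matrix (Fin n) (Fin n) K).updateCol j y).det = y j := by
    rw [← Matrix.cramer_apply, Matrix.cramer_one]; rfl
  refine ⟨((1 : Matrix (Fin n) (Fin n) K).updateCol j y).submatrix id (Equiv.swap j e), ?_, ?_⟩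
  · rw [Matrix.isUnit_iff_isUnit_det, Matrix.det_permute', hdet]
    refine IsUnit.mul ?_ (isUnit_iff_ne_zero.mpr hj)
    exact (Units.isUnit (Equiv.Perm.sign (Equiv.swap j e))).map (Int.castRingHom K)
  · ext i
    simp

theorem exists_symm_mulVec_single {K : Type*} [Field K] {n : ℕ} (e : Fin n) (w : Fin n → K) :
    ∃ s : Matrix (Fin n) (Fin n) K, sᵀ = s ∧ s.mulVec (Pi.single e 1) = w := by
  refine ⟨Matrix.of fun i j => if j = e then w i else if i = e then w j else 0, ?_, ?_⟩
  · ext i j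
    simp only [Matrix.transpose_apply, Matrix.of_apply]
    split_ifs <;> simp_all
  · ext i
    simp

theorem symJ_mul_self (n : ℕ) (K : Type*) [CommRing K] : symJ n K * symJ n K = -1 := by
  simp [symJ, Matrix.fromBlocks_multiply, ← Matrix.fromBlocks_one, Matrix.fromBlocks_neg]

theorem Sp_mul {n : ℕ} {K : Type*} [CommRing K] {g h : Matrix (Fin n ⊕ Fin n) (Fin n ⊕ Fin n) K}
    (hg : g ∈ Sp n K) (hh : h ∈ Sp n K) : g * h ∈ Sp n K := by
  have hg : gᵀ * symJ n K * g = symJ n K := hg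
  have hh : hᵀ * symJ n K * h = symJ n K := hh
  change (g * h)ᵀ * symJ n K * (g * h) = symJ n K
  calc _ = hᵀ * (gᵀ * symJ n K * g) * h := by simp only [Matrix.transpose_mul, Matrix.mul_assoc]
    _ = _ := by rw [hg, hh]

theorem Sp_det {n : ℕ} {K : Type*} [CommRing K] {h : Matrix (Fin n ⊕ Fin n) (Fin n ⊕ Fin n) K}
    (hh : h ∈ Sp n K) : IsUnit h.det := by
  have hh : hᵀ * symJ n K * h = symJ n K := hh
  have h1 : (-(symJ n K * hᵀ * symJ n K)) * h = 1 := by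
    calc _ = -(symJ n K * (hᵀ * symJ n K * h)) := by
          simp only [Matrix.neg_mul, Matrix.mul_assoc]
      _ = 1 := by rw [hh, symJ_mul_self, neg_neg]
  exact Matrix.isUnit_det_of_left_inverse h1

theorem Sp_inv {n : ℕ} {K : Type*} [CommRing K] {h : Matrix (Fin n ⊕ Fin n) (Fin n ⊕ Fin n) K}
    (hh : h ∈ Sp n K) : h⁻¹ ∈ Sp n K := by
  have hd := Sp_det hh
  have hh : hᵀ * symJ n K * h = symJ n K := hh
  have h2 : h * h⁻¹ = 1 := Matrix.mul_nonsing_inv h hd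
  change (h⁻¹)ᵀ * symJ n K * h⁻¹ = symJ n K
  calc _ = (h⁻¹)ᵀ * (hᵀ * symJ n K * h) * h⁻¹ := by rw [hh]
    _ = (h * h⁻¹)ᵀ * symJ n K * (h * h⁻¹) := by
      simp only [Matrix.transpose_mul, Matrix.mul_assoc]
    _ = _ := by rw [h2]; simp

theorem Sp_symJ (n : ℕ) (K : Type*) [CommRing K] : symJ n K ∈ Sp n K := by
  change (symJ n K)ᵀ * symJ n K * symJ n K = symJ n K
  simp [symJ, Matrix.fromBlocks_multiply, Matrix.fromBlocks_transpose]

theorem Sp_m {n : ℕ} {K : Type*} [CommRing K] {s : Matrix (Fin n) (Fin n) K} (hs : sᵀ = s) :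
    Matrix.fromBlocks 1 s 0 1 ∈ Sp n K := by
  change (Matrix.fromBlocks 1 s 0 1)ᵀ * symJ n K * Matrix.fromBlocks 1 s 0 1 = symJ n K
  simp [symJ, Matrix.fromBlocks_multiply, Matrix.fromBlocks_transpose, hs]

theorem Sp_diag {n : ℕ} {K : Type*} [CommRing K] {a : Matrix (Fin n) (Fin n) K} (ha : IsUnit a) :
    Matrix.fromBlocks a 0 0 ((aᵀ)⁻¹) ∈ Sp n K := by
  have hd : IsUnit a.det := (Matrix.isUnit_iff_isUnit_det a).mp ha
  have hd' : IsUnit aᵀ.det := by rwa [Matrix.det_transpose]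
  change (Matrix.fromBlocks a 0 0 ((aᵀ)⁻¹))ᵀ * symJ n K * Matrix.fromBlocks a 0 0 ((aᵀ)⁻¹)
    = symJ n K
  simp [symJ, Matrix.fromBlocks_multiply, Matrix.fromBlocks_transpose,
    Matrix.transpose_nonsing_inv, Matrix.mul_nonsing_inv _ hd', Matrix.nonsing_inv_mul _ hd]

theorem exists_factor {n : ℕ} {K : Type*} [CommRing K]
    {g h : Matrix (Fin n ⊕ Fin n) (Fin n ⊕ Fin n) K} (hg : g ∈ Sp n K) (hh : h ∈ Sp n K)
    (v : Fin n ⊕ Fin n → K) (hv : h.mulVec v = g.mulVec v) :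
    ∃ γ ∈ Sp n K, γ.mulVec v = v ∧ g = h * γ := by
  have hd := Sp_det hh
  refine ⟨h⁻¹ * g, Sp_mul (Sp_inv hh) hg, ?_, ?_⟩
  · rw [← Matrix.mulVec_mulVec, ← hv, Matrix.mulVec_mulVec, Matrix.nonsing_inv_mul h hd,
      Matrix.one_mulVec]
  · rw [← Matrix.mul_assoc, Matrix.mul_nonsing_inv h hd, Matrix.one_mul]

/-- Every `g ∈ Sp_{2n}(K)` can be written as `diag[a, ᵀa⁻¹] m(s) γ` or
`diag[a, ᵀa⁻¹] m(s) η_n γ` with `a ∈ GL_n(K)`, `s` symmetric, and `γ` in the Klingen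
parabolic of corank one (the stabilizer of the line spanned by the last basis vector). -/
theorem sp_cusp_representatives (K : Type*) [Field K] (n : ℕ) (hn : 1 ≤ n)
    (g : Matrix (Fin n ⊕ Fin n) (Fin n ⊕ Fin n) K) (hg : g ∈ Sp n K) :
    ∃ a : Matrix (Fin n) (Fin n) K, IsUnit a ∧
      ∃ s : Matrix (Fin n) (Fin n) K, sᵀ = s ∧
        ∃ γ ∈ Sp n K,
          (∃ k : K, γ.mulVec (lastBasisVec n K hn) = k • lastBasisVec n K hn) ∧
          γ.mulVec (lastBasisVec n K hn) ≠ 0 ∧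
          (g = Matrix.fromBlocks a 0 0 ((aᵀ)⁻¹) * Matrix.fromBlocks 1 s 0 1 * γ ∨
           g = Matrix.fromBlocks a 0 0 ((aᵀ)⁻¹) * Matrix.fromBlocks 1 s 0 1 *
                 symJ n K * γ) := by
  have hvs : lastBasisVec n K hn = Sum.elim (0 : Fin n → K) (Pi.single ⟨n - 1, by omega⟩ 1) := by
    ext i
    rcases i with i | i <;> simp [lastBasisVec, Pi.single_apply]
  have hv0 : lastBasisVec n K hn ≠ 0 := by
    intro h
    have := congrFun h (Sum.inr ⟨n - 1, by omega⟩)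
    simp [lastBasisVec] at this
  generalize lastBasisVec n K hn = v at hvs hv0 ⊢
  generalize (⟨n - 1, by omega⟩ : Fin n) = e at hvs
  obtain ⟨x, y, hxy⟩ : ∃ x y : Fin n → K, g.mulVec v = Sum.elim x y :=
    ⟨_, _, (Sum.elim_comp_inl_inr _).symm⟩
  by_cases hy : y = 0
  · have hx : -x ≠ 0 := by
      intro hx
      apply hv0
      have h0 : g.mulVec v = 0 := by
        rw [hxy, hy, neg_eq_zero.mp hx]
        ext i
        rcases i with i | i <;> rfl
      have h1 : (g⁻¹ * g).mulVec v = 0 := by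
        rw [← Matrix.mulVec_mulVec, h0, Matrix.mulVec_zero]
      rwa [Matrix.nonsing_inv_mul g (Sp_det hg), Matrix.one_mulVec] at h1
    obtain ⟨a, ha, hae⟩ := exists_unit_mulVec_single e (-x) hx
    have hs : (0 : Matrix (Fin n) (Fin n) K)ᵀ = 0 := Matrix.transpose_zero
    obtain ⟨γ, hγ, hγv, hgγ⟩ := exists_factor hg
      (Sp_mul (Sp_mul (Sp_diag ha) (Sp_m hs)) (Sp_symJ n K)) v (by
        rw [hxy, hvs, hy, ← Matrix.mulVec_mulVec, ← Matrix.mulVec_mulVec, symJ,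
          Matrix.fromBlocks_mulVec, Matrix.fromBlocks_mulVec, Matrix.fromBlocks_mulVec]
        simp only [Sum.elim_comp_inl, Sum.elim_comp_inr, Matrix.mulVec_zero, Matrix.zero_mulVec,
          Matrix.one_mulVec, Matrix.neg_mulVec, Matrix.mulVec_neg, hae, zero_add, add_zero,
          neg_neg, neg_zero])
    exact ⟨a, ha, 0, hs, γ, hγ, ⟨1, by rw [hγv, one_smul]⟩, by rwa [hγv], Or.inr hgγ⟩
  · obtain ⟨b, hb, hbe⟩ := exists_unit_mulVec_single e y hy
    have hbd : IsUnit b.det := (Matrix.isUnit_iff_isUnit_det b).mp hb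
    obtain ⟨s, hs, hse⟩ := exists_symm_mulVec_single e (bᵀ.mulVec x)
    have hbd' : IsUnit bᵀ.det := by rwa [Matrix.det_transpose]
    have ha : IsUnit (bᵀ)⁻¹ := by
      rw [Matrix.isUnit_nonsing_inv_iff, Matrix.isUnit_iff_isUnit_det]; exact hbd'
    have hab : (((bᵀ)⁻¹)ᵀ)⁻¹ = b := by
      rw [Matrix.transpose_nonsing_inv, Matrix.transpose_transpose,
        Matrix.nonsing_inv_nonsing_inv b hbd]
    obtain ⟨γ, hγ, hγv, hgγ⟩ := exists_factor hg (Sp_mul (Sp_diag ha) (Sp_m hs)) v (by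
        rw [hxy, hvs, hab, ← Matrix.mulVec_mulVec,
          Matrix.fromBlocks_mulVec, Matrix.fromBlocks_mulVec]
        simp only [Sum.elim_comp_inl, Sum.elim_comp_inr, Matrix.mulVec_zero, Matrix.zero_mulVec,
          Matrix.one_mulVec, hse, hbe, zero_add, add_zero, Matrix.mulVec_mulVec,
          Matrix.nonsing_inv_mul _ hbd', Matrix.zero_mul])
    exact ⟨_, ha, s, hs, γ, hγ, ⟨1, by rw [hγv, one_smul]⟩, by rwa [hγv], Or.inl hgγ⟩
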